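/- (Formal interpolating vector field of an exact symplectic family is Hamiltonian with periodic Hamiltonians) Let B ⊆ ℝ^d be a ball and let f_μ : B × ℝ^d → ℝ^d × ℝ^d, for |μ| ≤ μ̄, be a family of maps, jointly analytic in (x,μ), with f₀ the identity, such that each f_μ is a lift of a map of B × 𝕋^d (i.e. f_μ(p, q + e) = f_μ(p,q) + (0,e) for all e ∈ ℤ^d) and each f_μ is exact symplectic: Df_μ(x)ᵀ J Df_μ(x) = J everywhere, and for every smooth curve γ : [0,1] → B × ℝ^d with γ(1) − γ(0) ∈ {0} × ℤ^d the loop action A(γ) = ∫₀¹ p(t)·q'(t) dt satisfies A(f_μ ∘ γ) = A(γ). Let (g_k)_{k≥1} be the unique sequence of analytic coefficient vector fields of the formal interpolation (i.e. such that for every m the time-one map of G_m = Σ_{k=1}^m μ^k g_k agrees with f_μ up to O(μ^{m+1}) at every point). Then for every k there exists a function h_k : B × ℝ^d → ℝ, 1-periodic in each component of q, such that g_k = (−∂_q h_k, ∂_p h_k). -/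

import Mathlib

/-- Real phase space `ℝ^d × ℝ^d` with the sup norm. -/
abbrev RPhase (d : ℕ) := (Fin d → ℝ) × (Fin d → ℝ)

/-- `g` is the sequence of coefficient vector fields of the formal interpolation of the
family `f_μ` on `V`: for every `m` and `x ∈ V`, the time-one map of
`G_m = Σ_{k=1}^m μ^k g_k` differs from `f_μ(x)` by `O(μ^{m+1})` as `μ → 0`. -/
def FormalInterpolation (d : ℕ) (V : Set (RPhase d))
    (f : ℝ → RPhase d → RPhase d) (g : ℕ → RPhase d → RPhase d) : Prop :=
  ∀ m : ℕ, ∀ x ∈ V, ∃ C > (0 : ℝ), ∃ μ' > (0 : ℝ), ∀ μ : ℝ, |μ| ≤ μ' →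
    ∃ γ : ℝ → RPhase d, γ 0 = x ∧
      (∀ t ∈ Set.Icc (0 : ℝ) 1, γ t ∈ V ∧
        HasDerivAt γ (∑ k ∈ Finset.Icc 1 m, μ ^ k • g k (γ t)) t) ∧
      ‖f μ x - γ 1‖ ≤ C * |μ| ^ (m + 1)

/-- The loop action `A(γ) = ∫₀¹ p(t)·q'(t) dt` of a curve `γ = (p,q)` in phase space. -/
noncomputable def loopAction (d : ℕ) (γ : ℝ → RPhase d) : ℝ :=
  ∫ t in (0 : ℝ)..1, ∑ i, (γ t).1 i * deriv (fun u => (γ u).2 i) t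

/-! The interpolation says that `φ ∘ f_μ` has the Taylor series `exp (∑ μ ^ k • L_k) φ`, where `L_k`
is the derivative along `g_k`. The coefficient of `μ ^ m` in the exponential is `L_m φ` plus
compositions of the `L_k` with `k < m`, so whatever is stable under these operators passes, by
induction, from the Taylor coefficients of the left-hand side to `L_m φ`.

For `φ = id` this gives the periodicity of `g_m`. The same series with Lie derivatives describes the
pullbacks `f_μ^* λ` of `λ = p · dq`. As `f_μ` is exact symplectic, `f_μ^* λ - λ` is closed with
vanishing periods, so its Taylor coefficients are differentials of periodic functions, and hence
`L_{g_m} λ = du` with `u` periodic. By Cartan's formula `ι_{g_m} dλ = d (u - λ(g_m))`, that is,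
`h_m = λ(g_m) - u` is a Hamiltonian of `g_m`. -/

section FormalInterpolation

open Set Filter Topology Asymptotics
open Finset.HasAntidiagonal (antidiagonal)
open scoped ContDiff

section IteratedOperators

variable {M : Type*} [AddCommGroup M]

/-- The coefficient of `μ ^ j` in `(∑ k ≥ 1, μ ^ k • L k) ^ n` applied to `w`.
The operators `L k` need not be additive. -/
def iterCoeff (L : ℕ → M → M) (w : M) : ℕ → ℕ → M
  | 0, 0 => w
  | 0, _ + 1 => 0
  | _ + 1, 0 => 0
  | n + 1, j + 1 => ∑ p ∈ antidiagonal j, L (p.1 + 1) (iterCoeff L w n p.2)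

variable {L : ℕ → M → M} {w : M}

lemma iterCoeff_succ_succ (n j : ℕ) : iterCoeff L w (n + 1) (j + 1) =
    ∑ p ∈ antidiagonal j, L (p.1 + 1) (iterCoeff L w n p.2) := by
  rw [iterCoeff]

lemma iterCoeff_mem (E : AddSubmonoid M) (hw : w ∈ E)
    (hL : ∀ k, 1 ≤ k → ∀ u ∈ E, L k u ∈ E) (n j : ℕ) : iterCoeff L w n j ∈ E := by
  induction n generalizing j with
  | zero => cases j with
    | zero => simpa only [iterCoeff] using hw
    | succ j => simpa only [iterCoeff] using E.zero_mem
  | succ n ih => cases j with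
    | zero => simpa only [iterCoeff] using E.zero_mem
    | succ j =>
      rw [iterCoeff_succ_succ]
      exact E.sum_mem fun p _ => hL _ p.1.succ_pos _ (ih p.2)

lemma iterCoeff_eq_zero_of_lt (hL : ∀ k, L k 0 = 0) {n j : ℕ} (hj : j < n) :
    iterCoeff L w n j = 0 := by
  induction n generalizing j with
  | zero => exact absurd hj j.not_lt_zero
  | succ n ih => cases j with
    | zero => rw [iterCoeff]
    | succ j =>
      rw [iterCoeff_succ_succ]
      refine Finset.sum_eq_zero fun p hp => ?_
      rw [ih (by have := Finset.HasAntidiagonal.mem_antidiagonal.1 hp; omega), hL]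

lemma iterCoeff_one (hL : ∀ k, L k 0 = 0) {j : ℕ} (hj : 1 ≤ j) : iterCoeff L w 1 j = L j w := by
  obtain ⟨j, rfl⟩ := Nat.exists_eq_add_of_le' hj
  rw [iterCoeff_succ_succ, Finset.sum_eq_single (j, 0)]
  · rw [iterCoeff]
  · rintro ⟨a, b⟩ hab hne
    cases b with
    | zero => simp_all
    | succ b => rw [iterCoeff, hL]
  · simp

lemma iterCoeff_mem_of_low_order_mem (E : AddSubmonoid M) (hL : ∀ k, L k 0 = 0) {m : ℕ}
    (hw : ∀ k, 1 ≤ k → k < m → L k w ∈ E) (hE : ∀ k, 1 ≤ k → k < m → ∀ u ∈ E, L k u ∈ E)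
    (n j : ℕ) (hj : 1 ≤ j) (hjm : j ≤ m) (hn : j = m → n ≠ 1) : iterCoeff L w n j ∈ E := by
  obtain ⟨j, rfl⟩ := Nat.exists_eq_add_of_le' hj
  induction n generalizing j with
  | zero => simpa only [iterCoeff] using E.zero_mem
  | succ n ih =>
    rw [iterCoeff_succ_succ]
    refine E.sum_mem fun p hp => ?_
    have hp := Finset.HasAntidiagonal.mem_antidiagonal.1 hp
    rcases p with ⟨a, _ | b⟩
    · cases n with
      | zero => simpa only [iterCoeff] using hw (a + 1) a.succ_pos (by omega)
      | succ n => simpa only [iterCoeff, hL] using E.zero_mem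
    · exact hE _ a.succ_pos (by omega) _ (ih b b.succ_pos (by omega) (by omega))

variable [Module ℝ M]

/-- The coefficient of `μ ^ j` in `exp (∑ k ≥ 1, μ ^ k • L k)` applied to `w`. -/
noncomputable def expCoeff (L : ℕ → M → M) (w : M) (j : ℕ) : M :=
  ∑ n ∈ Finset.range (j + 1), (n.factorial : ℝ)⁻¹ • iterCoeff L w n j

-- In the coefficient of `μ ^ m` of the exponential, every term other than `L m w` only involves
-- operators of index `< m` applied, in the end, to `w`.
lemma apply_mem_of_expCoeff_mem (E : Submodule ℝ M) (hL : ∀ k, L k 0 = 0)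
    (hE : ∀ k, 1 ≤ k → L k w ∈ E → ∀ u ∈ E, L k u ∈ E)
    (hexp : ∀ m, 1 ≤ m → expCoeff L w m ∈ E) {m : ℕ} (hm : 1 ≤ m) : L m w ∈ E := by
  induction m using Nat.strong_induction_on with
  | _ m ih =>
  have hlow : ∀ k, 1 ≤ k → k < m → L k w ∈ E := fun k hk hkm => ih k hkm hk
  have hterm : ∀ n, n ≠ 1 → iterCoeff L w n m ∈ E := fun n hn =>
    iterCoeff_mem_of_low_order_mem E.toAddSubmonoid hL hlow
      (fun k hk hkm => hE k hk (hlow k hk hkm)) n m hm le_rfl fun _ => hn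
  have hsplit := hexp m hm
  rw [expCoeff, ← Finset.add_sum_erase _ _ (Finset.mem_range.2 (by omega : 1 < m + 1)),
    Nat.factorial_one, Nat.cast_one, inv_one, one_smul, iterCoeff_one hL hm] at hsplit
  exact (Submodule.add_mem_iff_left E (E.sum_mem fun n hn =>
    E.smul_mem _ (hterm n (Finset.ne_of_mem_erase hn)))).1 hsplit

end IteratedOperators

section TaylorCoefficients

variable {Y : Type*} [NormedAddCommGroup Y] [NormedSpace ℝ Y]

lemma eq_zero_of_sum_pow_smul_isLittleO {m : ℕ} {c : ℕ → Y}
    (h : (fun μ : ℝ => ∑ j ∈ Finset.range (m + 1), μ ^ j • c j) =o[𝓝[≠] 0] fun μ => μ ^ m) :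
    ∀ j ≤ m, c j = 0 := by
  induction m generalizing c with
  | zero =>
    have : c 0 = 0 := by simpa [isLittleO_const_left] using h
    simpa using this
  | succ m ih =>
    have hzero : c 0 = 0 := by
      have hcont : Continuous fun μ : ℝ => ∑ j ∈ Finset.range (m + 2), μ ^ j • c j := by fun_prop
      have hlim : Tendsto (fun μ : ℝ => ∑ j ∈ Finset.range (m + 2), μ ^ j • c j)
          (𝓝[≠] 0) (𝓝 (c 0)) := by
        simpa [Finset.sum_range_succ'] using (hcont.tendsto 0).mono_left nhdsWithin_le_nhds
      refine tendsto_nhds_unique hlim (h.trans_tendsto ?_)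
      simpa using ((continuous_pow (M := ℝ) (m + 1)).tendsto 0).mono_left nhdsWithin_le_nhds
    have hquot : (fun μ : ℝ => ∑ j ∈ Finset.range (m + 1), μ ^ j • c (j + 1))
        =o[𝓝[≠] 0] fun μ => μ ^ m := by
      have hinv := (isBigO_refl (fun μ : ℝ => μ⁻¹) (𝓝[≠] 0)).smul_isLittleO h
      refine hinv.congr' ?_ ?_ <;> filter_upwards [self_mem_nhdsWithin] with μ (hμ : μ ≠ 0)
      · rw [Finset.sum_range_succ', hzero, smul_zero, add_zero, Finset.smul_sum]
        simp_rw [pow_succ', mul_smul, inv_smul_smul₀ hμ]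
      · rw [pow_succ', smul_eq_mul, inv_mul_cancel_left₀ hμ]
    rintro (_ | j) hj
    · exact hzero
    · exact ih hquot j (Nat.le_of_succ_le_succ hj)

lemma isLittleO_sub_sum_iteratedDeriv {u : ℝ → Y} {x₀ : ℝ} {m : ℕ} (hu : ContDiffAt ℝ m u x₀) :
    (fun x => u x - ∑ j ∈ Finset.range (m + 1),
      (x - x₀) ^ j • (j.factorial : ℝ)⁻¹ • iteratedDeriv j u x₀) =o[𝓝 x₀]
        fun x => (x - x₀) ^ m := by
  obtain ⟨s, hs, hus⟩ := hu.contDiffOn le_rfl (by simp)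
  obtain ⟨r, hr, hrs⟩ := Metric.mem_nhds_iff.1 (by simpa using hs)
  have hx₀ := Metric.mem_ball_self (x := x₀) hr
  have htaylor := taylor_isLittleO (convex_ball x₀ r) hx₀ (hus.mono hrs)
  rw [Metric.isOpen_ball.nhdsWithin_eq hx₀] at htaylor
  refine htaylor.congr_left fun x => ?_
  simp_rw [taylor_within_apply, iteratedDerivWithin_of_isOpen Metric.isOpen_ball hx₀, mul_comm,
    mul_smul]

lemma iteratedDeriv_eq_of_isLittleO {u : ℝ → Y} {m : ℕ} (hu : ContDiffAt ℝ m u 0) {a : ℕ → Y}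
    (h : (fun μ => u μ - ∑ j ∈ Finset.range (m + 1), μ ^ j • a j) =o[𝓝 0] fun μ => μ ^ m) :
    ∀ j ≤ m, (j.factorial : ℝ)⁻¹ • iteratedDeriv j u 0 = a j := by
  have htaylor := isLittleO_sub_sum_iteratedDeriv hu
  simp only [sub_zero] at htaylor
  have hdiff := (h.sub htaylor).mono (nhdsWithin_le_nhds (s := {0}ᶜ))
  simp only [sub_sub_sub_cancel_left, ← Finset.sum_sub_distrib, ← smul_sub] at hdiff
  exact fun j hj => sub_eq_zero.1 (eq_zero_of_sum_pow_smul_isLittleO hdiff j hj)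

-- The derivative of `∑ (1 - t) ^ n / n! • u n t` telescopes when `u n' ≈ u (n + 1)`.
lemma hasDerivAt_sum_one_sub_pow_smul {u r : ℕ → ℝ → Y} {N : ℕ} {t : ℝ}
    (hu : ∀ n ≤ N, HasDerivAt (u n) (u (n + 1) t + r n t) t) :
    HasDerivAt (fun s : ℝ => ∑ n ∈ Finset.range (N + 1), ((1 - s) ^ n / n.factorial) • u n s)
      (((1 - t) ^ N / N.factorial) • u (N + 1) t +
        ∑ n ∈ Finset.range (N + 1), ((1 - t) ^ n / n.factorial) • r n t) t := by
  induction N with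
  | zero => simpa using hu 0 le_rfl
  | succ N ih =>
    have hpow : HasDerivAt (fun s : ℝ => (1 - s) ^ (N + 1) / (N + 1).factorial)
        (-((1 - t) ^ N / N.factorial)) t := by
      refine ((((hasDerivAt_id' t).const_sub 1).fun_pow (N + 1)).div_const
        ((N + 1).factorial : ℝ)).congr_deriv ?_
      rw [Nat.factorial_succ, Nat.cast_mul, Nat.add_sub_cancel]
      field_simp
    simp_rw [Finset.sum_range_succ _ (N + 1)]
    refine ((ih fun n hn => hu n (by omega)).add (hpow.smul (hu (N + 1) le_rfl))).congr_deriv ?_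
    module

lemma norm_sub_sum_inv_factorial_smul_le {u r : ℕ → ℝ → Y} {N : ℕ} {ε : ℝ}
    (hu : ∀ n ≤ N, ∀ t ∈ Icc (0 : ℝ) 1, HasDerivAt (u n) (u (n + 1) t + r n t) t)
    (hlast : ∀ t ∈ Icc (0 : ℝ) 1, u (N + 1) t = 0)
    (hr : ∀ n ≤ N, ∀ t ∈ Icc (0 : ℝ) 1, ‖r n t‖ ≤ ε) :
    ‖u 0 1 - ∑ n ∈ Finset.range (N + 1), (n.factorial : ℝ)⁻¹ • u n 0‖ ≤ (N + 1) * ε := by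
  have hbound : ∀ t ∈ Ico (0 : ℝ) 1, ‖((1 - t) ^ N / N.factorial) • u (N + 1) t +
      ∑ n ∈ Finset.range (N + 1), ((1 - t) ^ n / n.factorial) • r n t‖ ≤ (N + 1) * ε := by
    intro t ht
    have ht' : t ∈ Icc (0 : ℝ) 1 := Ico_subset_Icc_self ht
    rw [hlast t ht', smul_zero, zero_add]
    calc ‖∑ n ∈ Finset.range (N + 1), ((1 - t) ^ n / n.factorial) • r n t‖
        ≤ ∑ _n ∈ Finset.range (N + 1), ε := norm_sum_le_of_le _ fun n hn => by
          have hpow : (1 - t) ^ n / n.factorial ≤ 1 :=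
            div_le_one_of_le₀ ((pow_le_one₀ (by linarith [ht.2]) (by linarith [ht.1])).trans
              (mod_cast n.factorial_pos)) (by positivity)
          have hpos : 0 ≤ (1 - t) ^ n / n.factorial :=
            div_nonneg (pow_nonneg (by linarith [ht.2]) n) (by positivity)
          rw [norm_smul, Real.norm_of_nonneg hpos]
          exact (mul_le_of_le_one_left (norm_nonneg _) hpow).trans
            (hr n (Finset.mem_range_succ_iff.1 hn) t ht')
      _ = (N + 1) * ε := by simp
  have hmean := norm_image_sub_le_of_norm_deriv_le_segment_01'
    (fun t ht => (hasDerivAt_sum_one_sub_pow_smul fun n hn => hu n hn t ht).hasDerivWithinAt) hbound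
  simpa [Finset.sum_range_succ' _ N] using hmean

end TaylorCoefficients

section DirectionalDerivatives

variable {X Y : Type*} [NormedAddCommGroup X] [NormedSpace ℝ X]
  [NormedAddCommGroup Y] [NormedSpace ℝ Y] {V : Set X}

/-- The derivative `g · φ` of a function `φ` along a vector field `g`. -/
noncomputable def dirDeriv (g : X → X) (φ : X → Y) (x : X) : Y := fderiv ℝ φ x (g x)

lemma dirDeriv_zero (g : X → X) : dirDeriv g (0 : X → Y) = 0 :=
  funext fun x => by simp [dirDeriv]

/-- The space of maps which are smooth on `V`. -/
def smoothOn (Y : Type*) [NormedAddCommGroup Y] [NormedSpace ℝ Y] (V : Set X) :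
    Submodule ℝ (X → Y) where
  carrier := {φ | ContDiffOn ℝ ∞ φ V}
  zero_mem' := contDiffOn_const
  add_mem' hφ hψ := ContDiffOn.add hφ hψ
  smul_mem' c _ hφ := ContDiffOn.const_smul c hφ

lemma differentiableAt_of_mem_smoothOn (hV : IsOpen V) {φ : X → Y} (hφ : φ ∈ smoothOn Y V) {x : X}
    (hx : x ∈ V) : DifferentiableAt ℝ φ x :=
  (ContDiffOn.contDiffAt hφ (hV.mem_nhds hx)).differentiableAt (by simp)

lemma continuousAt_of_mem_smoothOn (hV : IsOpen V) {φ : X → Y} (hφ : φ ∈ smoothOn Y V) {x : X}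
    (hx : x ∈ V) : ContinuousAt φ x :=
  (differentiableAt_of_mem_smoothOn hV hφ hx).continuousAt

lemma fderiv_mem_smoothOn (hV : IsOpen V) {φ : X → Y} (hφ : φ ∈ smoothOn Y V) :
    fderiv ℝ φ ∈ smoothOn (X →L[ℝ] Y) V :=
  ContDiffOn.fderiv_of_isOpen hφ hV (by simp)

lemma isSymmSndFDerivAt_of_mem_smoothOn (hV : IsOpen V) {φ : X → Y} (hφ : φ ∈ smoothOn Y V) {x : X}
    (hx : x ∈ V) : IsSymmSndFDerivAt ℝ φ x :=
  (ContDiffOn.contDiffAt hφ (hV.mem_nhds hx)).isSymmSndFDerivAt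
    (by rw [minSmoothness_of_isRCLikeNormedField]; exact WithTop.coe_le_coe.2 le_top)

lemma dirDeriv_mem_smoothOn (hV : IsOpen V) {g : X → X} (hg : g ∈ smoothOn X V) {φ : X → Y}
    (hφ : φ ∈ smoothOn Y V) : dirDeriv g φ ∈ smoothOn Y V :=
  ContDiffOn.clm_apply (fderiv_mem_smoothOn hV hφ) hg

lemma iterCoeff_dirDeriv_mem_smoothOn (hV : IsOpen V) {g : ℕ → X → X}
    (hg : ∀ k, 1 ≤ k → g k ∈ smoothOn X V) {φ : X → Y} (hφ : φ ∈ smoothOn Y V) (n j : ℕ) :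
    iterCoeff (fun k => dirDeriv (g k)) φ n j ∈ smoothOn Y V :=
  iterCoeff_mem (smoothOn Y V).toAddSubmonoid hφ
    (fun k hk _ hu => dirDeriv_mem_smoothOn hV (hg k hk) hu) n j

end DirectionalDerivatives

section TruncatedFlow

variable {X Y : Type*} [NormedAddCommGroup X] [NormedSpace ℝ X]
  [NormedAddCommGroup Y] [NormedSpace ℝ Y] {V : Set X} {g : ℕ → X → X} {m : ℕ} {μ : ℝ} {x : X}

/-- The truncation `G_m = ∑_{k=1}^m μ ^ k • g k` of the formal vector field. -/
def truncField (g : ℕ → X → X) (m : ℕ) (μ : ℝ) (x : X) : X := ∑ k ∈ Finset.Icc 1 m, μ ^ k • g k x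

/-- `γ` is a trajectory of `G_m` on the time interval `[0, 1]`, starting at `x`. -/
structure IsTruncTrajectory (g : ℕ → X → X) (m : ℕ) (μ : ℝ) (x : X) (γ : ℝ → X) : Prop where
  apply_zero : γ 0 = x
  hasDerivAt : ∀ t ∈ Icc (0 : ℝ) 1, HasDerivAt γ (truncField g m μ (γ t)) t

lemma truncField_eq_sum_range (g : ℕ → X → X) (m : ℕ) (μ : ℝ) (x : X) :
    truncField g m μ x = ∑ k ∈ Finset.range m, μ ^ (k + 1) • g (k + 1) x := by
  rw [truncField, Finset.range_eq_Ico, Finset.sum_Ico_add' (fun k => μ ^ k • g k x)]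
  rfl

lemma norm_truncField_le (g : ℕ → X → X) (m : ℕ) (hμ : |μ| ≤ 1) (x : X) :
    ‖truncField g m μ x‖ ≤ |μ| * ∑ k ∈ Finset.Icc 1 m, ‖g k x‖ := by
  rw [Finset.mul_sum]
  refine norm_sum_le_of_le _ fun k hk => ?_
  rw [norm_smul, norm_pow, Real.norm_eq_abs]
  gcongr
  exact pow_le_of_le_one (abs_nonneg μ) hμ (Nat.one_le_iff_ne_zero.1 (Finset.mem_Icc.1 hk).1)

lemma IsTruncTrajectory.mem_closedBall {γ : ℝ → X} (hγ : IsTruncTrajectory g m μ x γ) {r : ℝ}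
    (hr : 0 ≤ r) (hfield : ∀ y ∈ Metric.closedBall x r, ‖truncField g m μ y‖ < r) :
    ∀ t ∈ Icc (0 : ℝ) 1, γ t ∈ Metric.closedBall x r := by
  have hfence := image_norm_le_of_norm_deriv_right_lt_deriv_boundary (f := fun t => γ t - x)
    (B := fun t => r * t) (B' := fun _ => r)
    (fun t ht => ((hγ.hasDerivAt t ht).sub_const x).continuousAt.continuousWithinAt)
    (fun t ht => ((hγ.hasDerivAt t (Ico_subset_Icc_self ht)).sub_const x).hasDerivWithinAt)
    (by simp [hγ.apply_zero]) (fun t => by simpa using (hasDerivAt_id t).const_mul r)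
    (fun t ht hnorm => hfield _ (by
      rw [mem_closedBall_iff_norm, hnorm]
      exact mul_le_of_le_one_right hr ht.2.le))
  intro t ht
  rw [mem_closedBall_iff_norm]
  exact (hfence ht).trans (mul_le_of_le_one_right hr ht.2)

lemma eventually_forall_isTruncTrajectory_mem (hg : ∀ k, 1 ≤ k → ContinuousAt (g k) x) {s : Set X}
    (hs : s ∈ 𝓝 x) : ∀ᶠ μ in 𝓝 (0 : ℝ), ∀ γ, IsTruncTrajectory g m μ x γ →
      ∀ t ∈ Icc (0 : ℝ) 1, γ t ∈ s := by
  have hcont : ContinuousAt (fun y => ∑ k ∈ Finset.Icc 1 m, ‖g k y‖) x :=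
    tendsto_finsetSum _ fun k hk => (hg k (Finset.mem_Icc.1 hk).1).norm
  set K := ∑ k ∈ Finset.Icc 1 m, ‖g k x‖ + 1
  have hK : ∀ᶠ y in 𝓝 x, ∑ k ∈ Finset.Icc 1 m, ‖g k y‖ < K :=
    hcont.eventually_lt_const (lt_add_one _)
  obtain ⟨r, hr, hrs⟩ := Metric.nhds_basis_closedBall.mem_iff.1 (hK.and hs)
  have hsmall : ∀ᶠ μ in 𝓝 (0 : ℝ), |μ| * K < r :=
    (Continuous.tendsto (by fun_prop) 0).eventually_lt_const (by simpa using hr)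
  have hone : ∀ᶠ μ in 𝓝 (0 : ℝ), |μ| < 1 := by
    simpa using eventually_abs_sub_lt (0 : ℝ) one_pos
  filter_upwards [hsmall, hone] with μ hμ hμ₁ γ hγ t ht
  refine (hrs (hγ.mem_closedBall hr.le (fun y hy => ?_) t ht)).2
  calc ‖truncField g m μ y‖ ≤ |μ| * ∑ k ∈ Finset.Icc 1 m, ‖g k y‖ := norm_truncField_le g m hμ₁.le y
    _ ≤ |μ| * K := by gcongr; exact (hrs hy).1.le
    _ < r := hμ

/-- The truncation to degree `m` in `μ` of `G ^ n φ`, for the derivation `G` along the formal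
vector field. -/
noncomputable def truncPow (g : ℕ → X → X) (φ : X → Y) (m : ℕ) (μ : ℝ) (n : ℕ) (x : X) : Y :=
  ∑ j ∈ Finset.range (m + 1), μ ^ j • iterCoeff (fun k => dirDeriv (g k)) φ n j x

/-- The indices of the terms of degree `> m` in `μ` of `G_m (truncPow g φ m μ n)`. -/
def highDegree (m : ℕ) : Finset (ℕ × ℕ) :=
  (Finset.range m ×ˢ Finset.range (m + 1)).filter fun p => ¬ p.1 + p.2 < m

/-- The terms of degree `> m` in `μ` of `G_m (truncPow g φ m μ n)`. -/
noncomputable def truncPowRem (g : ℕ → X → X) (φ : X → Y) (m : ℕ) (μ : ℝ) (n : ℕ) (x : X) : Y :=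
  ∑ p ∈ highDegree m, μ ^ (p.1 + p.2 + 1) •
    dirDeriv (g (p.1 + 1)) (iterCoeff (fun k => dirDeriv (g k)) φ n p.2) x

lemma sum_range_product_eq_sum_antidiagonal_add {M : Type*} [AddCommMonoid M] (m : ℕ)
    (c : ℕ × ℕ → M) : ∑ p ∈ Finset.range m ×ˢ Finset.range (m + 1), c p =
      ∑ j ∈ Finset.range m, ∑ p ∈ antidiagonal j, c p + ∑ p ∈ highDegree m, c p := by
  rw [highDegree, ← Finset.sum_filter_add_sum_filter_not _ (fun p : ℕ × ℕ => p.1 + p.2 < m) c,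
    ← Finset.sum_fiberwise_of_maps_to (g := fun p : ℕ × ℕ => p.1 + p.2) (t := Finset.range m)
      (fun p hp => Finset.mem_range.2 (Finset.mem_filter.1 hp).2)]
  congr 1
  refine Finset.sum_congr rfl fun j hj => Finset.sum_congr ?_ fun _ _ => rfl
  ext p
  have := Finset.mem_range.1 hj
  simp only [Finset.HasAntidiagonal.mem_antidiagonal, Finset.mem_filter, Finset.mem_product,
    Finset.mem_range]
  omega

lemma truncPow_succ (g : ℕ → X → X) (φ : X → Y) (m : ℕ) (μ : ℝ) (n : ℕ) (x : X) :
    truncPow g φ m μ (n + 1) x = ∑ j ∈ Finset.range m, ∑ p ∈ antidiagonal j, μ ^ (p.1 + p.2 + 1) •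
      dirDeriv (g (p.1 + 1)) (iterCoeff (fun k => dirDeriv (g k)) φ n p.2) x := by
  rw [truncPow, Finset.sum_range_succ']
  simp only [iterCoeff_succ_succ, Finset.sum_apply, Finset.smul_sum]
  rw [iterCoeff, Pi.zero_apply, smul_zero, add_zero]
  refine Finset.sum_congr rfl fun j _ => Finset.sum_congr rfl fun p hp => ?_
  rw [Finset.HasAntidiagonal.mem_antidiagonal.1 hp]

lemma truncPow_zero (φ : X → Y) (x : X) : truncPow g φ m μ 0 x = φ x := by
  rw [truncPow, Finset.sum_range_succ']
  simp [iterCoeff]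

lemma truncPow_eq_zero_of_lt (φ : X → Y) {n : ℕ} (hn : m < n) (x : X) : truncPow g φ m μ n x = 0 :=
  Finset.sum_eq_zero fun j hj => by
    rw [iterCoeff_eq_zero_of_lt (fun k => dirDeriv_zero (g k))
      ((Finset.mem_range_succ_iff.1 hj).trans_lt hn), Pi.zero_apply, smul_zero]

lemma sum_inv_factorial_smul_truncPow (φ : X → Y) (x : X) :
    ∑ n ∈ Finset.range (m + 1), (n.factorial : ℝ)⁻¹ • truncPow g φ m μ n x =
      ∑ j ∈ Finset.range (m + 1), μ ^ j • expCoeff (fun k => dirDeriv (g k)) φ j x := by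
  simp only [truncPow, expCoeff, Finset.smul_sum, Finset.sum_apply, Pi.smul_apply]
  rw [Finset.sum_comm]
  refine Finset.sum_congr rfl fun j hj => ?_
  have hj := Finset.mem_range_succ_iff.1 hj
  rw [← Finset.sum_subset (Finset.range_subset_range.2 (Nat.succ_le_succ hj)) fun n _ hn => by
    rw [iterCoeff_eq_zero_of_lt (fun k => dirDeriv_zero (g k))
      (by simpa using hn), Pi.zero_apply, smul_zero, smul_zero]]
  exact Finset.sum_congr rfl fun n _ => smul_comm _ _ _

variable (hV : IsOpen V) (hg : ∀ k, 1 ≤ k → g k ∈ smoothOn X V) {φ : X → Y}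
  (hφ : φ ∈ smoothOn Y V)
include hV hg hφ

lemma hasFDerivAt_truncPow (n : ℕ) (hx : x ∈ V) :
    HasFDerivAt (truncPow g φ m μ n) (∑ j ∈ Finset.range (m + 1),
      μ ^ j • fderiv ℝ (iterCoeff (fun k => dirDeriv (g k)) φ n j) x) x :=
  HasFDerivAt.fun_sum fun j _ => ((differentiableAt_of_mem_smoothOn hV
    (iterCoeff_dirDeriv_mem_smoothOn hV hg hφ n j) hx).hasFDerivAt).const_smul _

lemma fderiv_truncPow_truncField (n : ℕ) (hx : x ∈ V) :
    fderiv ℝ (truncPow g φ m μ n) x (truncField g m μ x) =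
      truncPow g φ m μ (n + 1) x + truncPowRem g φ m μ n x := by
  rw [truncPow_succ, truncPowRem, ← sum_range_product_eq_sum_antidiagonal_add,
    Finset.sum_product, (hasFDerivAt_truncPow hV hg hφ n hx).fderiv, truncField_eq_sum_range,
    map_sum]
  refine Finset.sum_congr rfl fun k _ => ?_
  simp only [map_smul, _root_.sum_apply, _root_.smul_apply, Finset.smul_sum, dirDeriv, smul_smul]
  refine Finset.sum_congr rfl fun j _ => ?_
  congr 1
  ring

lemma exists_eventually_norm_truncPowRem_le (hx : x ∈ V) : ∃ C, ∀ᶠ y in 𝓝 x, ∀ n ≤ m, ∀ μ : ℝ,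
    |μ| ≤ 1 → ‖truncPowRem g φ m μ n y‖ ≤ C * |μ| ^ (m + 1) := by
  let S : X → ℝ := fun y => ∑ n ∈ Finset.range (m + 1), ∑ p ∈ highDegree m,
    ‖dirDeriv (g (p.1 + 1)) (iterCoeff (fun k => dirDeriv (g k)) φ n p.2) y‖
  have hS : ContinuousAt S x := tendsto_finsetSum _ fun n _ => tendsto_finsetSum _ fun p _ =>
    (continuousAt_of_mem_smoothOn hV (dirDeriv_mem_smoothOn hV (hg _ p.1.succ_pos)
      (iterCoeff_dirDeriv_mem_smoothOn hV hg hφ n p.2)) hx).norm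
  refine ⟨S x + 1, ?_⟩
  filter_upwards [hS.eventually_lt_const (lt_add_one _)] with y hy n hn μ hμ
  calc ‖truncPowRem g φ m μ n y‖
      ≤ ∑ p ∈ highDegree m,
        ‖dirDeriv (g (p.1 + 1)) (iterCoeff (fun k => dirDeriv (g k)) φ n p.2) y‖ *
          |μ| ^ (m + 1) := by
        refine norm_sum_le_of_le _ fun p hp => ?_
        have hp := (Finset.mem_filter.1 hp).2
        rw [norm_smul, norm_pow, Real.norm_eq_abs, mul_comm]
        exact mul_le_mul_of_nonneg_left (pow_le_pow_of_le_one (abs_nonneg μ) hμ (by omega))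
          (norm_nonneg _)
    _ ≤ S y * |μ| ^ (m + 1) := by
        rw [← Finset.sum_mul]
        gcongr
        exact Finset.single_le_sum (f := fun n => ∑ p ∈ highDegree m,
          ‖dirDeriv (g (p.1 + 1)) (iterCoeff (fun k => dirDeriv (g k)) φ n p.2) y‖)
          (fun _ _ => Finset.sum_nonneg fun _ _ => norm_nonneg _) (Finset.mem_range_succ_iff.2 hn)
    _ ≤ (S x + 1) * |μ| ^ (m + 1) := by gcongr

lemma exists_eventually_norm_trajectory_sub_le (hx : x ∈ V) (m : ℕ) :
    ∃ C, ∀ᶠ μ in 𝓝 (0 : ℝ), ∀ γ, IsTruncTrajectory g m μ x γ →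
      ‖φ (γ 1) - ∑ j ∈ Finset.range (m + 1), μ ^ j • expCoeff (fun k => dirDeriv (g k)) φ j x‖
        ≤ C * |μ| ^ (m + 1) := by
  obtain ⟨C, hC⟩ := exists_eventually_norm_truncPowRem_le (m := m) hV hg hφ hx
  have hone : ∀ᶠ μ in 𝓝 (0 : ℝ), |μ| < 1 := by
    simpa using eventually_abs_sub_lt (0 : ℝ) one_pos
  refine ⟨(m + 1) * C, ?_⟩
  filter_upwards [hone, eventually_forall_isTruncTrajectory_mem
    (fun k hk => continuousAt_of_mem_smoothOn hV (hg k hk) hx) (hC.and (hV.mem_nhds hx))]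
    with μ hμ hmem γ hγ
  have htaylor := norm_sub_sum_inv_factorial_smul_le (N := m)
    (u := fun n t => truncPow g φ m μ n (γ t)) (r := fun n t => truncPowRem g φ m μ n (γ t))
    (fun n _ t ht => by
      have hγV := (hmem γ hγ t ht).2
      rw [← fderiv_truncPow_truncField hV hg hφ n hγV]
      exact (hasFDerivAt_truncPow hV hg hφ n hγV).differentiableAt.hasFDerivAt.comp_hasDerivAt t
        (hγ.hasDerivAt t ht))
    (fun t _ => truncPow_eq_zero_of_lt φ m.lt_succ_self (γ t))
    (fun n hn t ht => (hmem γ hγ t ht).1 n hn μ hμ.le)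
  simpa only [truncPow_zero, hγ.apply_zero, sum_inv_factorial_smul_truncPow, mul_assoc]
    using htaylor

end TruncatedFlow

section FormallyInterpolates

variable {X Y : Type*} [NormedAddCommGroup X] [NormedSpace ℝ X]
  [NormedAddCommGroup Y] [NormedSpace ℝ Y] {V : Set X} {f : ℝ → X → X} {g : ℕ → X → X}
  {m : ℕ} {μ : ℝ} {x : X}

/-- `∑ k ≥ 1, μ ^ k • g k` formally interpolates the family `f` on `V`: up to `O(μ ^ (m + 1))`, the
time-one map of its truncation `G_m` is `f μ`. This is `FormalInterpolation` without the requirement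
that the trajectories stay in `V`, which holds anyway for small `μ`. -/
def FormallyInterpolates (V : Set X) (f : ℝ → X → X) (g : ℕ → X → X) : Prop :=
  ∀ m : ℕ, ∀ x ∈ V, ∃ C, ∀ᶠ μ in 𝓝 (0 : ℝ), ∃ γ, IsTruncTrajectory g m μ x γ ∧
    ‖f μ x - γ 1‖ ≤ C * |μ| ^ (m + 1)

lemma FormallyInterpolates.prodMap (h : FormallyInterpolates V f g) :
    FormallyInterpolates (V ×ˢ V) (fun μ => Prod.map (f μ) (f μ))
      (fun k => Prod.map (g k) (g k)) := by
  rintro m ⟨x, y⟩ ⟨hx, hy⟩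
  obtain ⟨C, hC⟩ := h m x hx
  obtain ⟨D, hD⟩ := h m y hy
  refine ⟨max C D, ?_⟩
  filter_upwards [hC, hD] with μ ⟨γ, hγ, hγ₁⟩ ⟨δ, hδ, hδ₁⟩
  refine ⟨fun t => (γ t, δ t), ⟨by simp [hγ.apply_zero, hδ.apply_zero], fun t ht => ?_⟩, ?_⟩
  · exact ((hγ.hasDerivAt t ht).prodMk (hδ.hasDerivAt t ht)).congr_deriv
      (by simp [truncField, Prod.ext_iff, Prod.fst_sum, Prod.snd_sum])
  · exact max_le (hγ₁.trans (by gcongr; exact le_max_left C D))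
      (hδ₁.trans (by gcongr; exact le_max_right C D))

lemma IsTruncTrajectory.apply_one_of_zero {γ : ℝ → X} (hγ : IsTruncTrajectory g 0 μ x γ) :
    γ 1 = x := by
  rw [← hγ.apply_zero]
  exact constant_of_has_deriv_right_zero
    (fun t ht => (hγ.hasDerivAt t ht).continuousAt.continuousWithinAt)
    (fun t ht => by
      simpa [truncField] using (hγ.hasDerivAt t (Ico_subset_Icc_self ht)).hasDerivWithinAt)
    1 (right_mem_Icc.2 zero_le_one)

lemma FormallyInterpolates.exists_eventually_norm_sub_le (h : FormallyInterpolates V f g)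
    (hx : x ∈ V) : ∃ C, ∀ᶠ μ in 𝓝 (0 : ℝ), ‖f μ x - x‖ ≤ C * |μ| := by
  obtain ⟨C, hC⟩ := h 0 x hx
  refine ⟨C, hC.mono ?_⟩
  rintro μ ⟨γ, hγ, hγ₁⟩
  simpa [hγ.apply_one_of_zero] using hγ₁

lemma FormallyInterpolates.tendsto (h : FormallyInterpolates V f g) (hx : x ∈ V) :
    Tendsto (fun μ => f μ x) (𝓝 0) (𝓝 x) := by
  obtain ⟨C, hC⟩ := h.exists_eventually_norm_sub_le hx
  exact tendsto_iff_norm_sub_tendsto_zero.2 (squeeze_zero' (.of_forall fun _ => norm_nonneg _) hC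
    (Continuous.tendsto' (by fun_prop) 0 0 (by simp)))

variable (hV : IsOpen V) (hg : ∀ k, 1 ≤ k → g k ∈ smoothOn X V) {φ : X → Y}
  (hφ : φ ∈ smoothOn Y V)
include hV hg hφ

lemma FormallyInterpolates.sub_sum_expCoeff_isBigO (h : FormallyInterpolates V f g) (hx : x ∈ V)
    (m : ℕ) : (fun μ => φ (f μ x) - ∑ j ∈ Finset.range (m + 1),
      μ ^ j • expCoeff (fun k => dirDeriv (g k)) φ j x) =O[𝓝 0] fun μ => μ ^ (m + 1) := by
  obtain ⟨C, hC⟩ := h m x hx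
  obtain ⟨D, hD⟩ := exists_eventually_norm_trajectory_sub_le hV hg hφ hx m
  obtain ⟨K, s, hs, hφs⟩ := ((ContDiffOn.contDiffAt hφ (hV.mem_nhds hx)).of_le
    (by simp : (1 : WithTop ℕ∞) ≤ ∞)).exists_lipschitzOnWith
  refine IsBigO.of_bound (K * C + D) ?_
  filter_upwards [hC, hD, (h.tendsto hx).eventually hs, eventually_forall_isTruncTrajectory_mem
    (fun k hk => continuousAt_of_mem_smoothOn hV (hg k hk) hx) hs] with μ ⟨γ, hγ, hγ₁⟩ hflow hfs hγs
  rw [norm_pow, Real.norm_eq_abs]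
  calc _ ≤ ‖φ (f μ x) - φ (γ 1)‖ + ‖φ (γ 1) - ∑ j ∈ Finset.range (m + 1),
        μ ^ j • expCoeff (fun k => dirDeriv (g k)) φ j x‖ := norm_sub_le_norm_sub_add_norm_sub ..
    _ ≤ K * (C * |μ| ^ (m + 1)) + D * |μ| ^ (m + 1) := by
      refine add_le_add ((hφs.norm_sub_le hfs (hγs γ hγ 1 (right_mem_Icc.2 zero_le_one))).trans ?_)
        (hflow γ hγ)
      gcongr
    _ = (K * C + D) * |μ| ^ (m + 1) := by ring

lemma FormallyInterpolates.iteratedDeriv_comp (h : FormallyInterpolates V f g) (hx : x ∈ V)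
    (hf : ContDiffAt ℝ ∞ (fun μ => φ (f μ x)) 0) (j : ℕ) :
    (j.factorial : ℝ)⁻¹ • iteratedDeriv j (fun μ => φ (f μ x)) 0 =
      expCoeff (fun k => dirDeriv (g k)) φ j x :=
  iteratedDeriv_eq_of_isLittleO (hf.of_le (mod_cast le_top))
    ((h.sub_sum_expCoeff_isBigO hV hg hφ hx j).trans_isLittleO (isLittleO_pow_pow j.lt_succ_self)) j
    le_rfl

end FormallyInterpolates

section SmoothFamilies

variable {X Y Z : Type*} [NormedAddCommGroup X] [NormedSpace ℝ X]
  [NormedAddCommGroup Y] [NormedSpace ℝ Y] [NormedAddCommGroup Z] [NormedSpace ℝ Z]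
  {V : Set X} {I : Set ℝ} {F : ℝ → X → Y} {x : X} {μ : ℝ}

/-- `F μ x` is jointly smooth in `x ∈ V` and the parameter `μ ∈ I`. -/
def IsSmoothFamilyOn (V : Set X) (I : Set ℝ) (F : ℝ → X → Y) : Prop :=
  ContDiffOn ℝ ∞ (fun z : X × ℝ => F z.2 z.1) (V ×ˢ I)

lemma IsSmoothFamilyOn.smoothOn (hF : IsSmoothFamilyOn V I F) (hμ : μ ∈ I) : F μ ∈ smoothOn Y V :=
  ContDiffOn.comp (g := fun z : X × ℝ => F z.2 z.1) hF
    (contDiff_prodMk_left μ).contDiffOn fun _ hx => ⟨hx, hμ⟩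

lemma IsSmoothFamilyOn.contDiffOn_param (hF : IsSmoothFamilyOn V I F) (hx : x ∈ V) :
    ContDiffOn ℝ ∞ (fun μ => F μ x) I :=
  ContDiffOn.comp (g := fun z : X × ℝ => F z.2 z.1) hF
    (contDiff_prodMk_right x).contDiffOn fun _ hμ => ⟨hx, hμ⟩

section Open

variable (hV : IsOpen V) (hI : IsOpen I) (hF : IsSmoothFamilyOn V I F)
include hV hI hF

lemma IsSmoothFamilyOn.contDiffAt (hx : x ∈ V) (hμ : μ ∈ I) :
    ContDiffAt ℝ ∞ (fun z : X × ℝ => F z.2 z.1) (x, μ) :=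
  ContDiffOn.contDiffAt hF ((hV.prod hI).mem_nhds ⟨hx, hμ⟩)

lemma IsSmoothFamilyOn.hasFDerivAt (hx : x ∈ V) (hμ : μ ∈ I) : HasFDerivAt (F μ)
    ((fderiv ℝ (fun z : X × ℝ => F z.2 z.1) (x, μ)).comp (.inl ℝ X ℝ)) x :=
  HasFDerivAt.comp (g := fun z : X × ℝ => F z.2 z.1) (f := fun y => (y, μ)) x
    ((hF.contDiffAt hV hI hx hμ).differentiableAt (by simp)).hasFDerivAt
    (hasFDerivAt_prodMk_left x μ)

lemma IsSmoothFamilyOn.hasDerivAt (hx : x ∈ V) (hμ : μ ∈ I) : HasDerivAt (fun ν => F ν x)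
    (fderiv ℝ (fun z : X × ℝ => F z.2 z.1) (x, μ) (0, 1)) μ := by
  simpa [Function.comp_def] using (((hF.contDiffAt hV hI hx hμ).differentiableAt
    (by simp)).hasFDerivAt.comp μ (hasFDerivAt_prodMk_right x μ)).hasDerivAt

lemma IsSmoothFamilyOn.fderiv_uncurry : ContDiffOn ℝ ∞
    (fderiv ℝ (fun z : X × ℝ => F z.2 z.1)) (V ×ˢ I) :=
  ContDiffOn.fderiv_of_isOpen hF (hV.prod hI) (by simp)

lemma IsSmoothFamilyOn.spaceDeriv : IsSmoothFamilyOn V I fun μ x => fderiv ℝ (F μ) x :=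
  ((hF.fderiv_uncurry hV hI).clm_comp contDiffOn_const).congr fun _ hz =>
    (hF.hasFDerivAt hV hI hz.1 hz.2).fderiv

lemma IsSmoothFamilyOn.paramDeriv : IsSmoothFamilyOn V I fun μ x => deriv (fun ν => F ν x) μ :=
  ((hF.fderiv_uncurry hV hI).clm_apply contDiffOn_const).congr fun _ hz =>
    (hF.hasDerivAt hV hI hz.1 hz.2).deriv

lemma IsSmoothFamilyOn.fderiv_deriv (hx : x ∈ V) (hμ : μ ∈ I) :
    fderiv ℝ (fun y => deriv (fun ν => F ν y) μ) x =
      deriv (fun ν => fderiv ℝ (F ν) x) μ := by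
  set H := fun z : X × ℝ => F z.2 z.1
  have hDH : HasFDerivAt (fderiv ℝ H) (fderiv ℝ (fderiv ℝ H) (x, μ)) (x, μ) :=
    (differentiableAt_of_mem_smoothOn (hV.prod hI) (hF.fderiv_uncurry hV hI) ⟨hx, hμ⟩).hasFDerivAt
  have hleft : (fun y => deriv (fun ν => F ν y) μ) =ᶠ[𝓝 x] fun y => fderiv ℝ H (y, μ) (0, 1) := by
    filter_upwards [hV.mem_nhds hx] with y hy using (hF.hasDerivAt hV hI hy hμ).deriv
  have hright : (fun ν => fderiv ℝ (F ν) x) =ᶠ[𝓝 μ]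
      fun ν => (fderiv ℝ H (x, ν)).comp (.inl ℝ X ℝ) := by
    filter_upwards [hI.mem_nhds hμ] with ν hν using (hF.hasFDerivAt hV hI hx hν).fderiv
  have hspace : HasFDerivAt (fun y => fderiv ℝ H (y, μ))
      ((fderiv ℝ (fderiv ℝ H) (x, μ)).comp (.inl ℝ X ℝ)) x :=
    hDH.comp (f := fun y => (y, μ)) x (hasFDerivAt_prodMk_left x μ)
  have hparam : HasFDerivAt (fun ν => fderiv ℝ H (x, ν))
      ((fderiv ℝ (fderiv ℝ H) (x, μ)).comp (.inr ℝ X ℝ)) μ :=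
    hDH.comp (f := fun ν => (x, ν)) μ (hasFDerivAt_prodMk_right x μ)
  rw [hleft.fderiv_eq, hright.deriv_eq, (hspace.clm_apply (hasFDerivAt_const _ x)).fderiv,
    (hparam.clm_comp (hasFDerivAt_const _ μ)).hasDerivAt.deriv]
  ext v
  simpa using isSymmSndFDerivAt_of_mem_smoothOn (hV.prod hI) hF ⟨hx, hμ⟩ (v, 0) (0, 1)

lemma IsSmoothFamilyOn.iteratedParamDeriv (j : ℕ) :
    IsSmoothFamilyOn V I fun μ x => iteratedDeriv j (fun ν => F ν x) μ := by
  induction j with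
  | zero => simpa only [iteratedDeriv_zero] using hF
  | succ j ih => simpa only [iteratedDeriv_succ] using ih.paramDeriv hV hI

lemma IsSmoothFamilyOn.fderiv_iteratedDeriv (j : ℕ) (hx : x ∈ V) (hμ : μ ∈ I) :
    fderiv ℝ (fun y => iteratedDeriv j (fun ν => F ν y) μ) x =
      iteratedDeriv j (fun ν => fderiv ℝ (F ν) x) μ := by
  induction j generalizing μ with
  | zero => rfl
  | succ j ih =>
    simp only [iteratedDeriv_succ]
    rw [(hF.iteratedParamDeriv hV hI j).fderiv_deriv hV hI hx hμ]
    refine EventuallyEq.deriv_eq ?_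
    filter_upwards [hI.mem_nhds hμ] with ν hν using ih hν

end Open

lemma IsSmoothFamilyOn.clm_comp (hF : IsSmoothFamilyOn V I F) (L : Y →L[ℝ] Z) :
    IsSmoothFamilyOn V I fun μ x => L (F μ x) :=
  L.contDiff.comp_contDiffOn hF

lemma iteratedDeriv_clm_comp (L : Y →L[ℝ] Z) {u : ℝ → Y} (hu : ContDiffAt ℝ ∞ u μ) (j : ℕ) :
    iteratedDeriv j (fun ν => L (u ν)) μ = L (iteratedDeriv j u μ) := by
  have h := L.iteratedFDeriv_comp_left (hu.of_le (mod_cast le_top)) (i := j) (n := j) le_rfl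
  rw [iteratedDeriv_eq_iteratedFDeriv, iteratedDeriv_eq_iteratedFDeriv]
  exact congrArg (fun A => A fun _ => 1) h

lemma iteratedDeriv_eq_zero_of_eventually_const {u : ℝ → Y} {j : ℕ} (hj : 1 ≤ j) {y : Y}
    (hu : ∀ᶠ ν in 𝓝 μ, u ν = y) : iteratedDeriv j u μ = 0 := by
  rw [EventuallyEq.iteratedDeriv_eq (g := fun _ => y) j hu, iteratedDeriv_const, if_neg (by omega)]

end SmoothFamilies

section IntegralsOfFamilies

variable {Y : Type*} [NormedAddCommGroup Y] [NormedSpace ℝ Y] {I : Set ℝ}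
  {F : ℝ → ℝ → Y} {a b μ : ℝ}

lemma IsSmoothFamilyOn.hasDerivAt_integral (hI : IsOpen I) (hF : IsSmoothFamilyOn univ I F)
    (hμ : μ ∈ I) : HasDerivAt (fun ν => ∫ t in a..b, F ν t)
      (∫ t in a..b, deriv (fun ν => F ν t) μ) μ := by
  obtain ⟨r, hr, hrI⟩ := Metric.nhds_basis_closedBall.mem_iff.1 (hI.mem_nhds hμ)
  have hF' := hF.paramDeriv isOpen_univ hI
  have hcont : ∀ ν ∈ I, Continuous (F ν) := fun ν hν =>
    (contDiffOn_univ.1 (hF.smoothOn hν)).continuous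
  have hcont' : Continuous fun t => deriv (fun ν => F ν t) μ :=
    (contDiffOn_univ.1 (hF'.smoothOn hμ)).continuous
  obtain ⟨C, hC⟩ := (isCompact_uIcc.prod (isCompact_closedBall μ r)).exists_bound_of_continuousOn
    (hF'.continuousOn.mono (prod_mono (subset_univ (uIcc a b)) hrI))
  refine (intervalIntegral.hasDerivAt_integral_of_dominated_loc_of_deriv_le
    (F' := fun ν t => deriv (fun ν => F ν t) ν)
    (bound := fun _ => C) (Metric.closedBall_mem_nhds μ hr) ?_ ((hcont μ hμ).intervalIntegrable a b)
    (hcont').aestronglyMeasurable ?_ intervalIntegrable_const ?_).2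
  · filter_upwards [hI.mem_nhds hμ] with ν hν using (hcont ν hν).aestronglyMeasurable
  · exact .of_forall fun t ht ν hν => hC (t, ν) ⟨uIoc_subset_uIcc ht, hν⟩
  · exact .of_forall fun t _ ν hν =>
      (hF.hasDerivAt isOpen_univ hI (mem_univ t) (hrI hν)).differentiableAt.hasDerivAt

lemma IsSmoothFamilyOn.iteratedDeriv_integral (hI : IsOpen I) (hF : IsSmoothFamilyOn univ I F)
    (j : ℕ) (hμ : μ ∈ I) : iteratedDeriv j (fun ν => ∫ t in a..b, F ν t) μ =
      ∫ t in a..b, iteratedDeriv j (fun ν => F ν t) μ := by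
  induction j generalizing μ with
  | zero => rfl
  | succ j ih =>
    simp only [iteratedDeriv_succ]
    rw [← ((hF.iteratedParamDeriv isOpen_univ hI j).hasDerivAt_integral hI hμ).deriv]
    refine EventuallyEq.deriv_eq ?_
    filter_upwards [hI.mem_nhds hμ] with ν hν using ih hν

end IntegralsOfFamilies

section ExactForms

variable {X Y : Type*} [NormedAddCommGroup X] [NormedSpace ℝ X]
  [NormedAddCommGroup Y] [NormedSpace ℝ Y] {T V : Set X} {g : X → X} {φ : X → Y}
  {α β : X → X →L[ℝ] ℝ} {x : X}

/-- The space of maps which, on `V`, are invariant under the translations by elements of `T`. -/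
def periodicOn (Y : Type*) [NormedAddCommGroup Y] [NormedSpace ℝ Y] (T V : Set X) :
    Submodule ℝ (X → Y) where
  carrier := {φ | ∀ e ∈ T, ∀ x ∈ V, φ (x + e) = φ x}
  zero_mem' _ _ _ _ := rfl
  add_mem' hφ hψ e he x hx := congrArg₂ (· + ·) (hφ e he x hx) (hψ e he x hx)
  smul_mem' c _ hφ e he x hx := congrArg (c • ·) (hφ e he x hx)

lemma fderiv_mem_periodicOn (hV : IsOpen V) (hφ : φ ∈ periodicOn Y T V) :
    fderiv ℝ φ ∈ periodicOn (X →L[ℝ] Y) T V := fun e he x hx => by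
  rw [← fderiv_comp_add_right]
  refine EventuallyEq.fderiv_eq ?_
  filter_upwards [hV.mem_nhds hx] with y hy using hφ e he y hy

lemma dirDeriv_mem_periodicOn (hV : IsOpen V) (hg : g ∈ periodicOn X T V)
    (hφ : φ ∈ periodicOn Y T V) : dirDeriv g φ ∈ periodicOn Y T V := fun e he x hx => by
  rw [dirDeriv, fderiv_mem_periodicOn hV hφ e he x hx, hg e he x hx, dirDeriv]

/-- The space of one-forms which, on `V`, are differentials of smooth `T`-periodic functions. -/
def periodicExact (T V : Set X) : Submodule ℝ (X → X →L[ℝ] ℝ) where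
  carrier := {α | ∃ w ∈ smoothOn ℝ V ⊓ periodicOn ℝ T V, ∀ x ∈ V, HasFDerivAt w (α x) x}
  zero_mem' := ⟨0, zero_mem _, fun x _ => hasFDerivAt_const 0 x⟩
  add_mem' := by
    rintro _ _ ⟨v, hv, hv'⟩ ⟨w, hw, hw'⟩
    exact ⟨v + w, add_mem hv hw, fun x hx => (hv' x hx).add (hw' x hx)⟩
  smul_mem' := by
    rintro c _ ⟨w, hw, hw'⟩
    exact ⟨c • w, Submodule.smul_mem _ c hw, fun x hx => (hw' x hx).const_smul c⟩

lemma mem_periodicExact_congr (h : EqOn α β V) (hα : α ∈ periodicExact T V) :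
    β ∈ periodicExact T V := by
  obtain ⟨w, hw, hwα⟩ := hα
  exact ⟨w, hw, fun x hx => h hx ▸ hwα x hx⟩

lemma mem_periodicExact_of_closed (hV : IsOpen V) (hconvex : Convex ℝ V)
    (hT : ∀ e ∈ T, ∀ x ∈ V, ∀ t : ℝ, x + t • e ∈ V) (hα : α ∈ smoothOn (X →L[ℝ] ℝ) V)
    (hclosed : ∀ x ∈ V, ∀ v w, fderiv ℝ α x v w = fderiv ℝ α x w v)
    (hperiod : ∀ e ∈ T, ∀ x ∈ V, ∫ t in (0 : ℝ)..1, α (x + t • e) e = 0) :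
    α ∈ periodicExact T V := by
  obtain ⟨w, hw⟩ := hconvex.exists_forall_hasFDerivAt_of_fderiv_symmetric hV
    (ContDiffOn.differentiableOn hα (by simp)) hclosed
  refine ⟨w, ⟨?_, fun e he x hx => ?_⟩, hw⟩
  · exact (contDiffOn_infty_iff_fderiv_of_isOpen hV).2
      ⟨fun x hx => (hw x hx).differentiableAt.differentiableWithinAt,
        ContDiffOn.congr hα fun x hx => (hw x hx).fderiv⟩
  · have hline : ∀ t : ℝ, HasDerivAt (fun t : ℝ => w (x + t • e)) (α (x + t • e) e) t := fun t =>
      (hw _ (hT e he x hx t)).comp_hasDerivAt t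
        (by simpa using ((hasDerivAt_id t).smul_const e).const_add x)
    have hcont : Continuous fun t : ℝ => α (x + t • e) e :=
      ((ContDiffOn.continuousOn hα).comp_continuous (by fun_prop) (hT e he x hx)).clm_apply
        continuous_const
    have hftc := intervalIntegral.integral_eq_sub_of_hasDerivAt (a := 0) (b := 1)
      (fun t _ => hline t) (hcont.intervalIntegrable 0 1)
    rw [hperiod e he x hx] at hftc
    simpa using (sub_eq_zero.1 hftc.symm)

-- Both the exterior derivative and the periods commute with the derivatives in the parameter.
lemma iteratedDeriv_mem_periodicExact (hV : IsOpen V) (hconvex : Convex ℝ V)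
    (hT : ∀ e ∈ T, ∀ x ∈ V, ∀ t : ℝ, x + t • e ∈ V) {I : Set ℝ} (hI : IsOpen I) {μ₀ : ℝ}
    (hμ₀ : μ₀ ∈ I) {α : ℝ → X → X →L[ℝ] ℝ} (hα : IsSmoothFamilyOn V I α)
    (hclosed : ∀ μ ∈ I, ∀ x ∈ V, ∀ v w, fderiv ℝ (α μ) x v w - fderiv ℝ (α μ) x w v =
      fderiv ℝ (α μ₀) x v w - fderiv ℝ (α μ₀) x w v)
    (hperiod : ∀ μ ∈ I, ∀ e ∈ T, ∀ x ∈ V, ∫ t in (0 : ℝ)..1, α μ (x + t • e) e =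
      ∫ t in (0 : ℝ)..1, α μ₀ (x + t • e) e) {j : ℕ} (hj : 1 ≤ j) :
    (fun x => iteratedDeriv j (fun μ => α μ x) μ₀) ∈ periodicExact T V := by
  refine mem_periodicExact_of_closed hV hconvex hT ((hα.iteratedParamDeriv hV hI j).smoothOn hμ₀)
    (fun x hx v w => ?_) (fun e he x hx => ?_)
  · let antisymm : (X →L[ℝ] X →L[ℝ] ℝ) →L[ℝ] ℝ :=
      (ContinuousLinearMap.apply ℝ ℝ w).comp (ContinuousLinearMap.apply ℝ (X →L[ℝ] ℝ) v) -
        (ContinuousLinearMap.apply ℝ ℝ v).comp (ContinuousLinearMap.apply ℝ (X →L[ℝ] ℝ) w)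
    have hd := (hα.spaceDeriv hV hI).contDiffOn_param hx
    have hconst := iteratedDeriv_eq_zero_of_eventually_const
      (u := fun μ => antisymm (fderiv ℝ (α μ) x)) hj
      (eventually_of_mem (hI.mem_nhds hμ₀) fun μ hμ => hclosed μ hμ x hx v w)
    rw [iteratedDeriv_clm_comp antisymm (hd.contDiffAt (hI.mem_nhds hμ₀))] at hconst
    rw [hα.fderiv_iteratedDeriv hV hI j hx hμ₀]
    exact sub_eq_zero.1 hconst
  · let eval : (X →L[ℝ] ℝ) →L[ℝ] ℝ := ContinuousLinearMap.apply ℝ ℝ e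
    have hline : ContDiff ℝ ∞ fun z : ℝ × ℝ => (x + z.1 • e, z.2) := by fun_prop
    have hfam : IsSmoothFamilyOn univ I fun μ t => α μ (x + t • e) :=
      ContDiffOn.comp hα hline.contDiffOn fun z hz => ⟨hT e he x hx z.1, hz.2⟩
    have hconst := iteratedDeriv_eq_zero_of_eventually_const
      (u := fun μ => ∫ t in (0 : ℝ)..1, eval (α μ (x + t • e))) hj
      (eventually_of_mem (hI.mem_nhds hμ₀) fun μ hμ => hperiod μ hμ e he x hx)
    rw [(hfam.clm_comp eval).iteratedDeriv_integral hI j hμ₀] at hconst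
    refine (intervalIntegral.integral_congr fun t _ => ?_).trans hconst
    exact (iteratedDeriv_clm_comp eval
      ((hfam.contDiffOn_param (mem_univ t)).contDiffAt (hI.mem_nhds hμ₀)) j).symm

/-- The Lie derivative of a one-form `α` along a vector field `g`. -/
noncomputable def lieDeriv (g : X → X) (α : X → X →L[ℝ] ℝ) (x : X) : X →L[ℝ] ℝ :=
  fderiv ℝ α x (g x) + (α x).comp (fderiv ℝ g x)

lemma lieDeriv_zero (g : X → X) : lieDeriv g 0 = 0 :=
  funext fun x => by simp [lieDeriv]

lemma lieDeriv_congr (hV : IsOpen V) (h : EqOn α β V) : EqOn (lieDeriv g α) (lieDeriv g β) V := by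
  intro x hx
  rw [lieDeriv, lieDeriv, h hx, (h.eventuallyEq_of_mem (hV.mem_nhds hx)).fderiv_eq]

-- If `α` is the differential of `w`, its Lie derivative is the differential of `dirDeriv g w`.
lemma lieDeriv_mem_periodicExact (hV : IsOpen V) (hg : g ∈ smoothOn X V)
    (hgT : g ∈ periodicOn X T V) (hα : α ∈ periodicExact T V) :
    lieDeriv g α ∈ periodicExact T V := by
  obtain ⟨w, ⟨hw, hwT⟩, hwα⟩ := hα
  refine ⟨dirDeriv g w, ⟨dirDeriv_mem_smoothOn hV hg hw, dirDeriv_mem_periodicOn hV hgT hwT⟩,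
    fun x hx => ?_⟩
  have hdw := differentiableAt_of_mem_smoothOn hV (fderiv_mem_smoothOn hV hw) hx
  have heq : EqOn α (fderiv ℝ w) V := fun y hy => (hwα y hy).fderiv.symm
  refine (hdw.hasFDerivAt.clm_apply
    (differentiableAt_of_mem_smoothOn hV hg hx).hasFDerivAt).congr_fderiv ?_
  rw [lieDeriv_congr hV heq hx, lieDeriv, add_comm]
  congr 1
  ext v
  exact (isSymmSndFDerivAt_of_mem_smoothOn hV hw hx (g x) v).symm

end ExactForms

section TwoPointFunctions

variable {X : Type*} [NormedAddCommGroup X] [NormedSpace ℝ X] {V : Set X} {x : X}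

/-- The one-form `x ↦ ∂_y Φ(x, y)|_{y = x}` of a function `Φ` of two points. -/
noncomputable def diagForm (Φ : X × X → ℝ) (x : X) : X →L[ℝ] ℝ :=
  (fderiv ℝ Φ (x, x)).comp (.inr ℝ X X)

/-- The pullback under `f` of the one-form with linear coefficients `x ↦ b x`. -/
noncomputable def pullback (b : X →L[ℝ] X →L[ℝ] ℝ) (f : X → X) (x : X) : X →L[ℝ] ℝ :=
  (b (f x)).comp (fderiv ℝ f x)

lemma prodMap_mem_smoothOn {g : X → X} (hg : g ∈ smoothOn X V) :
    Prod.map g g ∈ smoothOn (X × X) (V ×ˢ V) :=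
  ContDiffOn.prodMap hg hg

lemma diagForm_bilinear (b : X →L[ℝ] X →L[ℝ] ℝ) {f : X → X} (hf : DifferentiableAt ℝ f x) :
    diagForm (fun z => b (f z.1) (f z.2)) x = pullback b f x := by
  have hleft : HasFDerivAt (fun z : X × X => b (f z.1))
      (b.comp ((fderiv ℝ f x).comp (.fst ℝ X X))) (x, x) :=
    b.hasFDerivAt.comp (x, x) (hf.hasFDerivAt.comp (x, x) hasFDerivAt_fst)
  have hright : HasFDerivAt (fun z : X × X => f z.2) ((fderiv ℝ f x).comp (.snd ℝ X X)) (x, x) :=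
    hf.hasFDerivAt.comp (x, x) hasFDerivAt_snd
  rw [diagForm, (hleft.clm_apply hright).fderiv]
  ext v
  simp [pullback]

lemma diagForm_dirDeriv_prodMap (hV : IsOpen V) {g : X → X} (hg : g ∈ smoothOn X V)
    {Φ : X × X → ℝ} (hΦ : Φ ∈ smoothOn ℝ (V ×ˢ V)) (hx : x ∈ V) :
    diagForm (dirDeriv (Prod.map g g) Φ) x = lieDeriv g (diagForm Φ) x := by
  have hV₂ := hV.prod hV
  have hxx : (x, x) ∈ V ×ˢ V := ⟨hx, hx⟩
  have hdΦ : HasFDerivAt (fderiv ℝ Φ) (fderiv ℝ (fderiv ℝ Φ) (x, x)) (x, x) :=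
    (differentiableAt_of_mem_smoothOn hV₂ (fderiv_mem_smoothOn hV₂ hΦ) hxx).hasFDerivAt
  have hg' := (differentiableAt_of_mem_smoothOn hV hg hx).hasFDerivAt
  have hdiag : HasFDerivAt (diagForm Φ) _ x :=
    (hdΦ.comp (f := fun y => (y, y)) x ((hasFDerivAt_id x).prodMk (hasFDerivAt_id x))).clm_comp
      (hasFDerivAt_const (ContinuousLinearMap.inr ℝ X X) x)
  have hdir : HasFDerivAt (dirDeriv (Prod.map g g) Φ) _ (x, x) :=
    hdΦ.clm_apply (HasFDerivAt.prodMap (x, x) hg' hg')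
  rw [lieDeriv, hdiag.fderiv, diagForm, hdir.fderiv]
  ext v
  have hsymm := isSymmSndFDerivAt_of_mem_smoothOn hV₂ hΦ hxx (g x, g x) (0, v)
  simp [diagForm, hsymm, add_comm]

section Coefficients

variable (hV : IsOpen V) {g : ℕ → X → X} (hg : ∀ k, 1 ≤ k → g k ∈ smoothOn X V)
  {Φ : X × X → ℝ} (hΦ : Φ ∈ smoothOn ℝ (V ×ˢ V))
include hV hg hΦ

lemma diagForm_iterCoeff (n j : ℕ) :
    EqOn (diagForm (iterCoeff (fun k => dirDeriv (Prod.map (g k) (g k))) Φ n j))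
      (iterCoeff (fun k => lieDeriv (g k)) (diagForm Φ) n j) V := by
  have hsmooth := iterCoeff_dirDeriv_mem_smoothOn (hV.prod hV)
    (fun k hk => prodMap_mem_smoothOn (hg k hk)) hΦ
  induction n generalizing j with
  | zero => cases j with
    | zero => simp [iterCoeff, eqOn_refl]
    | succ j => intro x _; simp [iterCoeff, diagForm]
  | succ n ih => cases j with
    | zero => intro x _; simp [iterCoeff, diagForm]
    | succ j =>
      intro x hx
      have hxx : (x, x) ∈ V ×ˢ V := ⟨hx, hx⟩
      have hdiff := fun p : ℕ × ℕ => differentiableAt_of_mem_smoothOn (hV.prod hV)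
        (dirDeriv_mem_smoothOn (hV.prod hV) (prodMap_mem_smoothOn (hg _ p.1.succ_pos))
          (hsmooth n p.2)) hxx
      rw [iterCoeff_succ_succ, iterCoeff_succ_succ, Finset.sum_apply, diagForm,
        fderiv_sum fun p _ => hdiff p, ContinuousLinearMap.finsetSum_comp]
      refine Finset.sum_congr rfl fun p _ => ?_
      rw [← lieDeriv_congr hV (ih p.2) hx]
      exact diagForm_dirDeriv_prodMap hV (hg _ p.1.succ_pos) (hsmooth n p.2) hx

lemma diagForm_expCoeff (j : ℕ) :
    EqOn (diagForm (expCoeff (fun k => dirDeriv (Prod.map (g k) (g k))) Φ j))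
      (expCoeff (fun k => lieDeriv (g k)) (diagForm Φ) j) V := by
  intro x hx
  have hxx : (x, x) ∈ V ×ˢ V := ⟨hx, hx⟩
  have hdiff := fun n => differentiableAt_of_mem_smoothOn (hV.prod hV)
    (iterCoeff_dirDeriv_mem_smoothOn (hV.prod hV) (fun k hk => prodMap_mem_smoothOn (hg k hk))
      hΦ n j) hxx
  rw [expCoeff, expCoeff, Finset.sum_apply, diagForm,
    fderiv_sum fun n _ => (hdiff n).const_smul _, ContinuousLinearMap.finsetSum_comp]
  refine Finset.sum_congr rfl fun n _ => ?_
  rw [fderiv_const_smul (hdiff n), Pi.smul_apply, ← diagForm_iterCoeff hV hg hΦ n j hx,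
    ContinuousLinearMap.smul_comp, diagForm]

end Coefficients

lemma IsSmoothFamilyOn.bilinear {I : Set ℝ} {f : ℝ → X → X} (hf : IsSmoothFamilyOn V I f)
    (b : X →L[ℝ] X →L[ℝ] ℝ) : IsSmoothFamilyOn (V ×ˢ V) I fun μ z => b (f μ z.1) (f μ z.2) := by
  have hleft : ContDiffOn ℝ ∞ (fun z : (X × X) × ℝ => f z.2 z.1.1) ((V ×ˢ V) ×ˢ I) :=
    ContDiffOn.comp (g := fun z : X × ℝ => f z.2 z.1) hf
      (by fun_prop : ContDiff ℝ ∞ fun z : (X × X) × ℝ => (z.1.1, z.2)).contDiffOn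
      fun z hz => ⟨hz.1.1, hz.2⟩
  have hright : ContDiffOn ℝ ∞ (fun z : (X × X) × ℝ => f z.2 z.1.2) ((V ×ˢ V) ×ˢ I) :=
    ContDiffOn.comp (g := fun z : X × ℝ => f z.2 z.1) hf
      (by fun_prop : ContDiff ℝ ∞ fun z : (X × X) × ℝ => (z.1.2, z.2)).contDiffOn
      fun z hz => ⟨hz.1.2, hz.2⟩
  exact (b.contDiff.comp_contDiffOn hleft).clm_apply hright

variable {I : Set ℝ} (hV : IsOpen V) (hI : IsOpen I) {f : ℝ → X → X} (hf : IsSmoothFamilyOn V I f)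
include hV hI hf

-- `pullback b (f μ)` involves the derivative of `f μ`, about which the interpolation says nothing
-- directly. It is read off on the diagonal from `b (f μ x) (f μ y)`, to which the interpolation
-- applies.
lemma FormallyInterpolates.iteratedDeriv_pullback {g : ℕ → X → X} (h : FormallyInterpolates V f g)
    (hg : ∀ k, 1 ≤ k → g k ∈ smoothOn X V) (h₀ : (0 : ℝ) ∈ I) (b : X →L[ℝ] X →L[ℝ] ℝ) (j : ℕ) :
    EqOn (fun x => (j.factorial : ℝ)⁻¹ • iteratedDeriv j (fun μ => pullback b (f μ) x) 0)
      (expCoeff (fun k => lieDeriv (g k)) (fun x => b x) j) V := by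
  intro x hx
  have hV₂ := hV.prod hV
  have hxx : (x, x) ∈ V ×ˢ V := ⟨hx, hx⟩
  have hF := hf.bilinear b
  set Φ : X × X → ℝ := fun z => b z.1 z.2
  have hΦ : Φ ∈ smoothOn ℝ (V ×ˢ V) := b.isBoundedBilinearMap.contDiff.contDiffOn
  have hb : diagForm Φ = fun x => b x := funext fun x => by
    simpa [pullback] using diagForm_bilinear b (differentiableAt_id (x := x))
  let restrict : (X × X →L[ℝ] ℝ) →L[ℝ] X →L[ℝ] ℝ :=
    (ContinuousLinearMap.compL ℝ X (X × X) ℝ).flip (.inr ℝ X X)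
  have hpull : (fun μ => pullback b (f μ) x) =ᶠ[𝓝 0] fun μ =>
      restrict (fderiv ℝ (fun z => b (f μ z.1) (f μ z.2)) (x, x)) := by
    filter_upwards [hI.mem_nhds h₀] with μ hμ
    exact (diagForm_bilinear b (differentiableAt_of_mem_smoothOn hV (hf.smoothOn hμ) hx)).symm
  have hexp : expCoeff (fun k => dirDeriv (Prod.map (g k) (g k))) Φ j =ᶠ[𝓝 (x, x)]
      (j.factorial : ℝ)⁻¹ • fun z => iteratedDeriv j (fun μ => b (f μ z.1) (f μ z.2)) 0 := by
    filter_upwards [hV₂.mem_nhds hxx] with z hz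
    exact (h.prodMap.iteratedDeriv_comp hV₂ (fun k hk => prodMap_mem_smoothOn (hg k hk)) hΦ hz
      ((hF.contDiffOn_param hz).contDiffAt (hI.mem_nhds h₀)) j).symm
  rw [← hb, ← diagForm_expCoeff hV hg hΦ j hx, diagForm, hexp.fderiv_eq, fderiv_const_smul
    (differentiableAt_of_mem_smoothOn hV₂ ((hF.iteratedParamDeriv hV₂ hI j).smoothOn h₀) hxx),
    hF.fderiv_iteratedDeriv hV₂ hI j hxx h₀, ContinuousLinearMap.smul_comp]
  dsimp only
  rw [hpull.iteratedDeriv_eq, iteratedDeriv_clm_comp restrict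
    (((hF.spaceDeriv hV₂ hI).contDiffOn_param hxx).contDiffAt (hI.mem_nhds h₀))]
  rfl

end TwoPointFunctions

section Interpolation

variable {X : Type*} [NormedAddCommGroup X] [NormedSpace ℝ X] {T V : Set X} {x : X}
  {b : X →L[ℝ] X →L[ℝ] ℝ}

lemma fderiv_pullback_sub_fderiv_pullback (hV : IsOpen V) {f : X → X} (hf : f ∈ smoothOn X V)
    (hx : x ∈ V) (v w : X) :
    fderiv ℝ (pullback b f) x v w - fderiv ℝ (pullback b f) x w v =
      b (fderiv ℝ f x v) (fderiv ℝ f x w) - b (fderiv ℝ f x w) (fderiv ℝ f x v) := by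
  have hdf : HasFDerivAt (fderiv ℝ f) (fderiv ℝ (fderiv ℝ f) x) x :=
    (differentiableAt_of_mem_smoothOn hV (fderiv_mem_smoothOn hV hf) hx).hasFDerivAt
  have hbf : HasFDerivAt (fun y => b (f y)) (b.comp (fderiv ℝ f x)) x :=
    b.hasFDerivAt.comp x (differentiableAt_of_mem_smoothOn hV hf hx).hasFDerivAt
  have hpull : HasFDerivAt (pullback b f) _ x := hbf.clm_comp hdf
  rw [hpull.fderiv]
  simp [isSymmSndFDerivAt_of_mem_smoothOn hV hf hx v w]

lemma IsSmoothFamilyOn.pullback {I : Set ℝ} {f : ℝ → X → X} (hf : IsSmoothFamilyOn V I f)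
    (hV : IsOpen V) (hI : IsOpen I) : IsSmoothFamilyOn V I fun μ => pullback b (f μ) :=
  ContDiffOn.clm_comp (hf.clm_comp b) (hf.spaceDeriv hV hI)

section Family

variable {I : Set ℝ} {f : ℝ → X → X} {g : ℕ → X → X} (hV : IsOpen V)
  (hT : ∀ e ∈ T, ∀ x ∈ V, ∀ t : ℝ, x + t • e ∈ V) (hI : IsOpen I) (h₀ : (0 : ℝ) ∈ I)
  (hf : IsSmoothFamilyOn V I f) (h : FormallyInterpolates V f g)
  (hg : ∀ k, 1 ≤ k → g k ∈ smoothOn X V)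
  (hlift : ∀ μ ∈ I, ∀ e ∈ T, ∀ x ∈ V, f μ (x + e) = f μ x + e)
include hV hT hI h₀ hf h hg hlift

lemma FormallyInterpolates.mem_periodicOn {m : ℕ} (hm : 1 ≤ m) : g m ∈ periodicOn X T V := by
  have hid : ∀ k, dirDeriv (g k) id = g k := fun k => funext fun x => by simp [dirDeriv]
  rw [← hid m]
  refine apply_mem_of_expCoeff_mem (L := fun k => dirDeriv (g k)) (periodicOn X T V)
    (fun k => dirDeriv_zero (g k))
    (fun k _ hk u hu => dirDeriv_mem_periodicOn hV (hid k ▸ hk) hu) (fun j hj e he x hx => ?_) hm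
  have hcoeff : ∀ y ∈ V, (j.factorial : ℝ)⁻¹ • iteratedDeriv j (fun μ => f μ y) 0 =
      expCoeff (fun k => dirDeriv (g k)) id j y := fun y hy =>
    h.iteratedDeriv_comp hV hg (φ := id) contDiffOn_id hy
      ((hf.contDiffOn_param hy).contDiffAt (hI.mem_nhds h₀)) j
  have hxe : x + e ∈ V := by simpa using hT e he x hx 1
  have hshift : (fun μ => f μ (x + e)) =ᶠ[𝓝 0] fun μ => e + f μ x :=
    eventually_of_mem (hI.mem_nhds h₀) fun μ hμ =>
      (hlift μ hμ e he x hx).trans (add_comm _ _)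
  rw [← hcoeff x hx, ← hcoeff _ hxe, hshift.iteratedDeriv_eq,
    iteratedDeriv_const_add (by omega)]

variable (hconvex : Convex ℝ V)
  (hclosed : ∀ μ ∈ I, ∀ x ∈ V, ∀ v w, b (fderiv ℝ (f μ) x v) (fderiv ℝ (f μ) x w) -
    b (fderiv ℝ (f μ) x w) (fderiv ℝ (f μ) x v) = b v w - b w v)
  (hperiod : ∀ μ ∈ I, ∀ e ∈ T, ∀ x ∈ V, ∫ t in (0 : ℝ)..1, pullback b (f μ) (x + t • e) e =
    ∫ t in (0 : ℝ)..1, b (x + t • e) e)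
include hconvex hclosed hperiod

lemma FormallyInterpolates.lieDeriv_mem_periodicExact {m : ℕ} (hm : 1 ≤ m) :
    lieDeriv (g m) (fun x => b x) ∈ periodicExact T V := by
  have hexact : ∀ j, 1 ≤ j →
      (fun x => iteratedDeriv j (fun μ => pullback b (f μ) x) 0) ∈ periodicExact T V := fun j hj =>
    iteratedDeriv_mem_periodicExact hV hconvex hT hI h₀ (hf.pullback hV hI)
      (fun μ hμ x hx v w => by
        rw [fderiv_pullback_sub_fderiv_pullback hV (hf.smoothOn hμ) hx,
          fderiv_pullback_sub_fderiv_pullback hV (hf.smoothOn h₀) hx, hclosed μ hμ x hx,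
          hclosed 0 h₀ x hx])
      (fun μ hμ e he x hx => by rw [hperiod μ hμ e he x hx, hperiod 0 h₀ e he x hx]) hj
  exact apply_mem_of_expCoeff_mem (L := fun k => lieDeriv (g k)) (periodicExact T V)
    (fun k => lieDeriv_zero (g k))
    (fun k hk _ _ hα => _root_.lieDeriv_mem_periodicExact hV (hg k hk)
      (h.mem_periodicOn hV hT hI h₀ hf hg hlift hk) hα)
    (fun j hj => mem_periodicExact_congr (h.iteratedDeriv_pullback hV hI hf hg h₀ b j)
      (Submodule.smul_mem _ _ (hexact j hj))) hm

end Family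

-- Cartan's formula `L_g α = d (ι_g α) + ι_g dα` for the one-form `α` given by `x ↦ b x`.
lemma exists_hamiltonian (hV : IsOpen V) (hbT : ∀ e ∈ T, b e = 0) {g : X → X}
    (hg : g ∈ smoothOn X V) (hgT : g ∈ periodicOn X T V)
    (hexact : lieDeriv g (fun x => b x) ∈ periodicExact T V) :
    ∃ u ∈ periodicOn ℝ T V, ∀ x ∈ V, HasFDerivAt u (b.flip (g x) - b (g x)) x := by
  obtain ⟨w, ⟨-, hwT⟩, hw⟩ := hexact
  refine ⟨fun x => b x (g x) - w x, fun e he x hx => ?_, fun x hx => ?_⟩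
  · simp [hbT e he, hgT e he x hx, hwT e he x hx]
  · refine ((b.hasFDerivAt.clm_apply
      (differentiableAt_of_mem_smoothOn hV hg hx).hasFDerivAt).sub (hw x hx)).congr_fderiv ?_
    ext v
    simp [lieDeriv]
    ring

end Interpolation

section PhaseSpace

variable {d : ℕ} {B : Set (Fin d → ℝ)} {x e : RPhase d}

/-- The one-form `p · dq` on phase space, as the linear map `(p, q) ↦ ∑ i, p i • dq i`. -/
noncomputable def liouvilleForm (d : ℕ) : RPhase d →L[ℝ] RPhase d →L[ℝ] ℝ :=
  ∑ i, ((ContinuousLinearMap.proj i).comp (.fst ℝ (Fin d → ℝ) (Fin d → ℝ))).smulRight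
    ((ContinuousLinearMap.proj (R := ℝ) i).comp (.snd ℝ (Fin d → ℝ) (Fin d → ℝ)))

lemma liouvilleForm_apply (x y : RPhase d) : liouvilleForm d x y = ∑ i, x.1 i * y.2 i := by
  simp [liouvilleForm, _root_.sum_apply]

lemma liouvilleForm_sub_liouvilleForm (x y : RPhase d) :
    liouvilleForm d x y - liouvilleForm d y x = ∑ i, (x.1 i * y.2 i - x.2 i * y.1 i) := by
  simp only [liouvilleForm_apply, Finset.sum_sub_distrib, mul_comm]

/-- The lattice `{0} × ℤ^d` of deck transformations of `ℝ^d × ℝ^d → ℝ^d × 𝕋^d`. -/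
def deckLattice (d : ℕ) : Set (RPhase d) :=
  range fun e : Fin d → ℤ => (0, fun i => (e i : ℝ))

lemma liouvilleForm_of_mem_deckLattice (he : e ∈ deckLattice d) : liouvilleForm d e = 0 := by
  obtain ⟨e, rfl⟩ := he
  exact ContinuousLinearMap.ext fun y => by simp [liouvilleForm_apply]

lemma add_smul_mem_of_mem_deckLattice (he : e ∈ deckLattice d) (hx : x ∈ B ×ˢ univ) (t : ℝ) :
    x + t • e ∈ B ×ˢ univ := by
  obtain ⟨e, rfl⟩ := he
  simpa using hx

lemma prodMk_add_eq_add (x : RPhase d) (v : Fin d → ℝ) : (x.1, x.2 + v) = x + (0, v) := by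
  ext <;> simp

lemma indicator_apply_add_of_mem_periodicOn {u : RPhase d → ℝ}
    (hu : u ∈ periodicOn ℝ (deckLattice d) (B ×ˢ univ)) (he : e ∈ deckLattice d) (x : RPhase d) :
    (B ×ˢ univ).indicator u (x + e) = (B ×ˢ univ).indicator u x := by
  have hmem : x + e ∈ B ×ˢ (univ : Set (Fin d → ℝ)) ↔ x ∈ B ×ˢ univ := by
    obtain ⟨e, rfl⟩ := he
    simp
  by_cases hx : x ∈ B ×ˢ univ
  · rw [indicator_of_mem (hmem.2 hx), indicator_of_mem hx, hu e he x hx]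
  · rw [indicator_of_notMem (mt hmem.1 hx), indicator_of_notMem hx]

lemma loopAction_comp_line {f : RPhase d → RPhase d}
    (hf : ∀ t : ℝ, DifferentiableAt ℝ f (x + t • e)) :
    loopAction d (fun t => f (x + t • e)) =
      ∫ t in (0 : ℝ)..1, pullback (liouvilleForm d) f (x + t • e) e := by
  refine intervalIntegral.integral_congr fun t _ => ?_
  have hline : HasDerivAt (fun s : ℝ => x + s • e) e t := by
    simpa using ((hasDerivAt_id t).smul_const e).const_add x
  have hcurve := (hf t).hasFDerivAt.comp_hasDerivAt t hline
  rw [pullback, ContinuousLinearMap.comp_apply, liouvilleForm_apply]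
  exact Finset.sum_congr rfl fun i _ => by
    rw [← ((hasDerivAt_pi.1 hcurve.snd) i).deriv]
    rfl

lemma FormalInterpolation.formallyInterpolates {V : Set (RPhase d)} {f : ℝ → RPhase d → RPhase d}
    {g : ℕ → RPhase d → RPhase d} (h : FormalInterpolation d V f g) :
    FormallyInterpolates V f g := fun m x hx => by
  obtain ⟨C, -, ε, hε, hC⟩ := h m x hx
  refine ⟨C, eventually_of_mem (Metric.closedBall_mem_nhds 0 hε) fun μ hμ => ?_⟩
  obtain ⟨γ, hγ₀, hγ, hγ₁⟩ := hC μ (by simpa using hμ)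
  exact ⟨γ, ⟨hγ₀, fun t ht => (hγ t ht).2⟩, hγ₁⟩

lemma integral_pullback_liouvilleForm {f : RPhase d → RPhase d}
    (hf : ∀ t : ℝ, DifferentiableAt ℝ f (x + t • e))
    (hloop : loopAction d (fun t => f (x + t • e)) = loopAction d (fun t => x + t • e)) :
    ∫ t in (0 : ℝ)..1, pullback (liouvilleForm d) f (x + t • e) e =
      ∫ t in (0 : ℝ)..1, liouvilleForm d (x + t • e) e := by
  rw [← loopAction_comp_line hf, hloop]
  simpa [pullback] using loopAction_comp_line (x := x) (e := e) fun t => differentiableAt_id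

theorem formal_vector_field_hamiltonian_periodic_general (d : ℕ)
    (B : Set (Fin d → ℝ)) (hB : IsOpen B) (hBconvex : Convex ℝ B)
    (I : Set ℝ) (hI : IsOpen I) (h₀ : (0 : ℝ) ∈ I)
    (f : ℝ → RPhase d → RPhase d)
    (hf : ContDiffOn ℝ ∞ (fun z : RPhase d × ℝ => f z.2 z.1) ((B ×ˢ univ) ×ˢ I))
    (hlift : ∀ μ ∈ I, ∀ x : RPhase d, x.1 ∈ B → ∀ e : Fin d → ℤ,
      f μ (x.1, x.2 + fun i => (e i : ℝ)) = ((f μ x).1, (f μ x).2 + fun i => (e i : ℝ)))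
    (hsympl : ∀ μ ∈ I, ∀ x : RPhase d, x.1 ∈ B → ∀ w₁ w₂ : RPhase d,
      ∑ i, ((fderiv ℝ (f μ) x w₁).1 i * (fderiv ℝ (f μ) x w₂).2 i -
            (fderiv ℝ (f μ) x w₁).2 i * (fderiv ℝ (f μ) x w₂).1 i) =
      ∑ i, (w₁.1 i * w₂.2 i - w₁.2 i * w₂.1 i))
    (hexact : ∀ μ ∈ I, ∀ γ : ℝ → RPhase d, ContDiff ℝ 1 γ →
      (∀ t, (γ t).1 ∈ B) → (γ 1).1 = (γ 0).1 →
      (∃ e : Fin d → ℤ, (γ 1).2 = (γ 0).2 + fun i => (e i : ℝ)) →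
      loopAction d (fun t => f μ (γ t)) = loopAction d γ)
    (g : ℕ → RPhase d → RPhase d)
    (hg : ∀ k, 1 ≤ k → ContDiffOn ℝ ∞ (g k) (B ×ˢ univ))
    (hgP : FormalInterpolation d (B ×ˢ univ) f g) :
    ∀ k, 1 ≤ k → ∃ h : RPhase d → ℝ,
      (∀ x : RPhase d, ∀ e : Fin d → ℤ, h (x.1, x.2 + fun i => (e i : ℝ)) = h x) ∧
      ∀ x ∈ B ×ˢ univ,
        DifferentiableAt ℝ h x ∧
        (∀ i, (g k x).1 i = -fderiv ℝ h x (0, Pi.single i 1)) ∧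
        (∀ i, (g k x).2 i = fderiv ℝ h x (Pi.single i 1, 0)) := by
  intro k hk
  have hV : IsOpen (B ×ˢ univ : Set (RPhase d)) := hB.prod isOpen_univ
  have hT : ∀ e ∈ deckLattice d, ∀ x ∈ B ×ˢ univ, ∀ t : ℝ, x + t • e ∈ B ×ˢ univ :=
    fun e he x hx => add_smul_mem_of_mem_deckLattice he hx
  have hliftT : ∀ μ ∈ I, ∀ e ∈ deckLattice d, ∀ x ∈ B ×ˢ univ, f μ (x + e) = f μ x + e := by
    rintro μ hμ _ ⟨e, rfl⟩ x hx
    simpa only [prodMk_add_eq_add] using hlift μ hμ x hx.1 e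
  have hclosed : ∀ μ ∈ I, ∀ x ∈ B ×ˢ univ, ∀ v w,
      liouvilleForm d (fderiv ℝ (f μ) x v) (fderiv ℝ (f μ) x w) -
        liouvilleForm d (fderiv ℝ (f μ) x w) (fderiv ℝ (f μ) x v) =
      liouvilleForm d v w - liouvilleForm d w v := fun μ hμ x hx v w => by
    simpa only [liouvilleForm_sub_liouvilleForm] using hsympl μ hμ x hx.1 v w
  have hperiod : ∀ μ ∈ I, ∀ e ∈ deckLattice d, ∀ x ∈ B ×ˢ univ,
      ∫ t in (0 : ℝ)..1, pullback (liouvilleForm d) (f μ) (x + t • e) e =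
        ∫ t in (0 : ℝ)..1, liouvilleForm d (x + t • e) e := fun μ hμ e he x hx => by
    refine integral_pullback_liouvilleForm (fun t => differentiableAt_of_mem_smoothOn hV
      (IsSmoothFamilyOn.smoothOn hf hμ) (hT e he x hx t))
      (hexact μ hμ _ (by fun_prop) (fun t => (hT e he x hx t).1) ?_ ?_)
    · obtain ⟨e, rfl⟩ := he; simp
    · obtain ⟨e, rfl⟩ := he; exact ⟨e, by simp⟩
  have hinterp := hgP.formallyInterpolates
  obtain ⟨u, huT, hu⟩ := exists_hamiltonian hV (fun e => liouvilleForm_of_mem_deckLattice) (hg k hk)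
    (hinterp.mem_periodicOn hV hT hI h₀ hf hg hliftT hk)
    (hinterp.lieDeriv_mem_periodicExact hV hT hI h₀ hf hg hliftT (hBconvex.prod convex_univ)
      hclosed hperiod hk)
  refine ⟨(B ×ˢ univ).indicator u, fun x e => ?_, fun x hx => ?_⟩
  · rw [prodMk_add_eq_add, indicator_apply_add_of_mem_periodicOn huT ⟨e, rfl⟩]
  · have hderiv := (hu x hx).congr_of_eventuallyEq
      (eqOn_indicator.eventuallyEq_of_mem (hV.mem_nhds hx))
    rw [hderiv.fderiv]
    exact ⟨hderiv.differentiableAt, by simp [liouvilleForm_apply, Pi.single_apply],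
      by simp [liouvilleForm_apply, Pi.single_apply]⟩

end PhaseSpace

end FormalInterpolation

/-- **Formal interpolating vector field of an exact symplectic family is Hamiltonian
with periodic Hamiltonians.**  If `f_μ` is a jointly analytic family of lifts of maps of
`B × 𝕋^d` with `f₀ = id`, each `f_μ` symplectic and exact (preserving loop actions of
lifted loops), and `(g_k)` is the sequence of coefficient vector fields of the formal
interpolation, then every `g_k` is the Hamiltonian vector field `(−∂_q h_k, ∂_p h_k)` of
a function `h_k` which is `1`-periodic in each angle. -/
theorem formal_vector_field_hamiltonian_periodic (d : ℕ) (hd : 1 ≤ d)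
    (c : Fin d → ℝ) (ρ : ℝ) (hρ : 0 < ρ)
    (B : Set (Fin d → ℝ)) (hB : B = Metric.ball c ρ)
    (μbar : ℝ) (hμbar : 0 < μbar)
    (f : ℝ → RPhase d → RPhase d)
    (hfa : AnalyticOnNhd ℝ (fun z : RPhase d × ℝ => f z.2 z.1)
      ((B ×ˢ (Set.univ : Set (Fin d → ℝ))) ×ˢ Metric.closedBall (0 : ℝ) μbar))
    (hf0 : ∀ x : RPhase d, x.1 ∈ B → f 0 x = x)
    (hlift : ∀ μ : ℝ, |μ| ≤ μbar → ∀ x : RPhase d, x.1 ∈ B → ∀ e : Fin d → ℤ,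
      f μ (x.1, x.2 + fun i => (e i : ℝ)) = ((f μ x).1, (f μ x).2 + fun i => (e i : ℝ)))
    (hsympl : ∀ μ : ℝ, |μ| ≤ μbar → ∀ x : RPhase d, x.1 ∈ B → ∀ w₁ w₂ : RPhase d,
      ∑ i, ((fderiv ℝ (f μ) x w₁).1 i * (fderiv ℝ (f μ) x w₂).2 i -
            (fderiv ℝ (f μ) x w₁).2 i * (fderiv ℝ (f μ) x w₂).1 i) =
      ∑ i, (w₁.1 i * w₂.2 i - w₁.2 i * w₂.1 i))
    (hexact : ∀ μ : ℝ, |μ| ≤ μbar → ∀ γ : ℝ → RPhase d, ContDiff ℝ 1 γ →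
      (∀ t, (γ t).1 ∈ B) → (γ 1).1 = (γ 0).1 →
      (∃ e : Fin d → ℤ, (γ 1).2 = (γ 0).2 + fun i => (e i : ℝ)) →
      loopAction d (fun t => f μ (γ t)) = loopAction d γ)
    (g : ℕ → RPhase d → RPhase d)
    (hg : ∀ k, 1 ≤ k → AnalyticOnNhd ℝ (g k) (B ×ˢ (Set.univ : Set (Fin d → ℝ))))
    (hgP : FormalInterpolation d (B ×ˢ (Set.univ : Set (Fin d → ℝ))) f g) :
    ∀ k, 1 ≤ k → ∃ h : RPhase d → ℝ,
      (∀ x : RPhase d, ∀ e : Fin d → ℤ, h (x.1, x.2 + fun i => (e i : ℝ)) = h x) ∧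
      ∀ x ∈ B ×ˢ (Set.univ : Set (Fin d → ℝ)),
        DifferentiableAt ℝ h x ∧
        (∀ i, (g k x).1 i = -fderiv ℝ h x (0, Pi.single i 1)) ∧
        (∀ i, (g k x).2 i = fderiv ℝ h x (Pi.single i 1, 0)) := by
  subst hB
  have hball : ∀ μ ∈ Metric.ball (0 : ℝ) μbar, |μ| ≤ μbar := fun μ hμ =>
    (mem_ball_zero_iff.1 hμ).le
  exact formal_vector_field_hamiltonian_periodic_general d (Metric.ball c ρ) Metric.isOpen_ball
    (convex_ball c ρ) (Metric.ball 0 μbar) Metric.isOpen_ball (Metric.mem_ball_self hμbar) f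
    (hfa.contDiffOn_of_completeSpace.mono (Set.prod_mono_right Metric.ball_subset_closedBall))
    (fun μ hμ => hlift μ (hball μ hμ)) (fun μ hμ => hsympl μ (hball μ hμ))
    (fun μ hμ => hexact μ (hball μ hμ)) g (fun k hk => (hg k hk).contDiffOn_of_completeSpace) hgP
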